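/- arXiv:1411.6791 — 3 statements merged into one kernel-verified Lean document; each statement's English description precedes it below -/
import Mathlib

section
/- Let $R > 0$ and for $0 \le \gamma \le R$ let $A_s(\gamma) = 2R^2 \arccos\!\big(\tfrac{\gamma}{2R}\big) - \gamma\sqrt{R^2 - \tfrac{\gamma^2}{4}}$. Then $\int_0^R \big(\pi R^2 - A_s(r)\big)\, \tfrac{2r}{R^2}\, dr = \tfrac{3\sqrt{3}}{4} R^2$. (Numerically, $\tfrac{3\sqrt{3}}{4} \approx 1.30$, giving the paper's claim $\mathbb{E}[A_{v\setminus i} \mid v \in \mathcal{N}_i] \approx 1.30\, R^2$.) -/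
/-!
When the centres of two disks of radius `R` move apart, the lens loses area at a rate equal to the
length of the common chord, so `A_c' = 2 s` with `s(r) = √(R² - r²/4)`. In the integration by parts
of `∫ A_c(r) · 2r dr` take `r² - R²`, rather than `r²`, as the antiderivative of `2r`: the boundary
terms vanish at `r = 0` and at `r = R`, and the remaining integrand `2 (R² - r²) s(r)` is exactly
the derivative of `2 r s(r)³`. This is why `π` does not occur in the value.
-/

open Real Set intervalIntegral

/-- Half the length of the common chord of two circles of radius `R` whose centres are at
distance `γ`. -/
noncomputable def halfChord (R γ : ℝ) : ℝ :=
  √(R ^ 2 - γ ^ 2 / 4)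

/-- The area `A_s(γ)` common to two disks of radius `R` whose centres are at distance `γ`, given by
its closed form for `0 ≤ γ ≤ 2 * R`. -/
noncomputable def lensArea (R γ : ℝ) : ℝ :=
  2 * R ^ 2 * arccos (γ / (2 * R)) - γ * halfChord R γ

/-- The area `A_c(γ)` of the part of a disk of radius `R` that lies outside a second such disk
whose centre is at distance `γ`. -/
noncomputable def complementArea (R γ : ℝ) : ℝ :=
  π * R ^ 2 - lensArea R γ

lemma continuous_halfChord (R : ℝ) : Continuous (halfChord R) := by
  unfold halfChord
  fun_prop

lemma continuous_complementArea (R : ℝ) : Continuous (complementArea R) := by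
  have := continuous_halfChord R
  have := continuous_arccos
  unfold complementArea lensArea
  fun_prop

lemma complementArea_zero (R : ℝ) : complementArea R 0 = 0 := by
  simp only [complementArea, lensArea, zero_div, arccos_zero]
  ring

lemma halfChord_self {R : ℝ} (hR : 0 ≤ R) : halfChord R R = √3 / 2 * R := by
  rw [halfChord, sqrt_eq_iff_mul_self_eq (by nlinarith) (by positivity)]
  linear_combination -(R ^ 2 / 4) * sq_sqrt (zero_le_three (α := ℝ))

section Deriv

variable {R γ : ℝ}

lemma sq_sub_sq_div_four_pos (hγ : γ ∈ Ioo (-(2 * R)) (2 * R)) : 0 < R ^ 2 - γ ^ 2 / 4 := by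
  nlinarith [hγ.1, hγ.2]

lemma halfChord_pos (hγ : γ ∈ Ioo (-(2 * R)) (2 * R)) : 0 < halfChord R γ :=
  sqrt_pos.2 (sq_sub_sq_div_four_pos hγ)

lemma halfChord_sq (hγ : γ ∈ Ioo (-(2 * R)) (2 * R)) : halfChord R γ ^ 2 = R ^ 2 - γ ^ 2 / 4 :=
  sq_sqrt (sq_sub_sq_div_four_pos hγ).le

lemma hasDerivAt_halfChord (hγ : γ ∈ Ioo (-(2 * R)) (2 * R)) :
    HasDerivAt (halfChord R) (-(γ / (4 * halfChord R γ))) γ := by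
  have h := (((hasDerivAt_pow 2 γ).div_const 4).const_sub (R ^ 2)).sqrt
    (sq_sub_sq_div_four_pos hγ).ne'
  refine h.congr_deriv ?_
  rw [← halfChord]
  have := halfChord_pos hγ
  field_simp
  norm_num

lemma sqrt_one_sub_div_sq (hR : 0 < R) (γ : ℝ) :
    √(1 - (γ / (2 * R)) ^ 2) = halfChord R γ / R := by
  have : 1 - (γ / (2 * R)) ^ 2 = (R ^ 2 - γ ^ 2 / 4) / R ^ 2 := by
    field_simp
    ring
  rw [this, sqrt_div' _ (sq_nonneg R), sqrt_sq hR.le, halfChord]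

lemma hasDerivAt_arccos_div_two_mul (hγ : γ ∈ Ioo (-(2 * R)) (2 * R)) :
    HasDerivAt (fun x ↦ arccos (x / (2 * R))) (-(1 / (2 * halfChord R γ))) γ := by
  have hR : 0 < R := by linarith [hγ.1, hγ.2]
  have hlower : -1 < γ / (2 * R) := by
    rw [lt_div_iff₀ (by positivity)]
    linarith [hγ.1]
  have hupper : γ / (2 * R) < 1 := (div_lt_one (by positivity)).2 hγ.2
  have h := (hasDerivAt_arccos hlower.ne' hupper.ne).comp γ
    ((hasDerivAt_id γ).div_const (2 * R))
  rw [sqrt_one_sub_div_sq hR] at h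
  refine h.congr_deriv ?_
  have := halfChord_pos hγ
  field_simp

lemma hasDerivAt_lensArea (hγ : γ ∈ Ioo (-(2 * R)) (2 * R)) :
    HasDerivAt (lensArea R) (-(2 * halfChord R γ)) γ := by
  have h := ((hasDerivAt_arccos_div_two_mul hγ).const_mul (2 * R ^ 2)).sub
    ((hasDerivAt_id γ).mul (hasDerivAt_halfChord hγ))
  refine h.congr_deriv ?_
  have := halfChord_pos hγ
  simp only [id]
  field_simp
  linear_combination 4 * halfChord_sq hγ

lemma hasDerivAt_complementArea (hγ : γ ∈ Ioo (-(2 * R)) (2 * R)) :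
    HasDerivAt (complementArea R) (2 * halfChord R γ) γ :=
  ((hasDerivAt_lensArea hγ).const_sub (π * R ^ 2)).congr_deriv (neg_neg _)

lemma hasDerivAt_mul_halfChord_pow_three (hγ : γ ∈ Ioo (-(2 * R)) (2 * R)) :
    HasDerivAt (fun x ↦ x * halfChord R x ^ 3) ((R ^ 2 - γ ^ 2) * halfChord R γ) γ := by
  have h := (hasDerivAt_id γ).mul ((hasDerivAt_halfChord hγ).pow 3)
  refine h.congr_deriv ?_
  have := halfChord_pos hγ
  simp only [id, Pi.pow_apply]
  field_simp
  push_cast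
  linear_combination 4 * halfChord R γ ^ 2 * halfChord_sq hγ

lemma hasDerivAt_complementArea_primitive (hγ : γ ∈ Ioo (-(2 * R)) (2 * R)) :
    HasDerivAt (fun x ↦ (x ^ 2 - R ^ 2) * complementArea R x + 2 * (x * halfChord R x ^ 3))
      (complementArea R γ * (2 * γ)) γ := by
  have h := (((hasDerivAt_pow 2 γ).sub_const (R ^ 2)).mul (hasDerivAt_complementArea hγ)).add
    ((hasDerivAt_mul_halfChord_pow_three hγ).const_mul 2)
  refine h.congr_deriv ?_
  push_cast
  ring

end Deriv

lemma integral_complementArea_mul_two_mul {R a b : ℝ} (ha : -(2 * R) ≤ a) (hab : a ≤ b)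
    (hb : b ≤ 2 * R) :
    ∫ r in a..b, complementArea R r * (2 * r) =
      ((b ^ 2 - R ^ 2) * complementArea R b + 2 * (b * halfChord R b ^ 3)) -
        ((a ^ 2 - R ^ 2) * complementArea R a + 2 * (a * halfChord R a ^ 3)) := by
  have := continuous_halfChord R
  have := continuous_complementArea R
  refine integral_eq_sub_of_hasDerivAt_of_le
    (f := fun x ↦ (x ^ 2 - R ^ 2) * complementArea R x + 2 * (x * halfChord R x ^ 3)) hab ?_
    (fun r hr ↦ hasDerivAt_complementArea_primitive ⟨ha.trans_lt hr.1, hr.2.trans_le hb⟩) ?_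
  · exact Continuous.continuousOn (by fun_prop)
  · exact Continuous.intervalIntegrable (by fun_prop) a b

open Real in
/-- Expected complementary area (Lemma 3(a) of the paper): with
`A_s(γ) = 2R²·arccos(γ/(2R)) − γ·√(R² − γ²/4)` the lens area of two radius-`R`
disks at center distance `γ`, one has
`∫₀^R (πR² − A_s(r)) · (2r/R²) dr = (3√3/4)·R² ≈ 1.30 R²`. -/
theorem expected_complement_area (R : ℝ) (hR : 0 < R) :
    ∫ r in (0:ℝ)..R,
        (π * R ^ 2 - (2 * R ^ 2 * Real.arccos (r / (2 * R)) -
          r * Real.sqrt (R ^ 2 - r ^ 2 / 4))) * (2 * r / R ^ 2) =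
      3 * Real.sqrt 3 / 4 * R ^ 2 := by
  calc ∫ r in (0:ℝ)..R, complementArea R r * (2 * r / R ^ 2)
    _ = (∫ r in (0:ℝ)..R, complementArea R r * (2 * r)) / R ^ 2 := by
      simp only [← mul_div_assoc, integral_div]
    _ = 2 * (R * halfChord R R ^ 3) / R ^ 2 := by
      rw [integral_complementArea_mul_two_mul (by linarith) hR.le (by linarith),
        complementArea_zero]
      ring
    _ = 3 * √3 / 4 * R ^ 2 := by
      rw [halfChord_self hR.le]
      field_simp
      linear_combination 4 * sq_sqrt (zero_le_three (α := ℝ))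
end

section
/- Let $T_d > 0$, $\lambda_c > 0$, and $0 \le \Delta t \le T_d$. Let $S$ be uniformly distributed on $[0, T_d]$ and $X$ be exponentially distributed with rate $\lambda_c$, with $S$ and $X$ independent. Then $\Pr(S + X > \Delta t) = 1 - \tfrac{\Delta t}{T_d} + \tfrac{1 - e^{-\lambda_c \Delta t}}{\lambda_c T_d}$. -/
open MeasureTheory ProbabilityTheory

/-! Conditionally on `S = s` the event has probability `Pr(X > Δt - s)`, which is
`e^{-λ_c (Δt - s)}` for `s ≤ Δt` and `1` for `s ≥ Δt`. Averaging over `s ∈ [0, T_d]` gives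
`((1 - e^{-λ_c Δt}) / λ_c + (T_d - Δt)) / T_d`. -/

open Measure in
lemma conv_Ioi_eq_lintegral {G : Type*} [AddCommGroup G] [LinearOrder G] [IsOrderedAddMonoid G]
    [TopologicalSpace G] [ClosedIicTopology G] [MeasurableSpace G] [OpensMeasurableSpace G]
    [MeasurableAdd₂ G] (μ ν : Measure G) [SFinite ν] (c : G) :
    (μ ∗ ν) (Set.Ioi c) = ∫⁻ x, ν (Set.Ioi (c - x)) ∂μ := by
  rw [conv, map_apply measurable_add measurableSet_Ioi,
    prod_apply (measurable_add measurableSet_Ioi)]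
  congr! 3 with x
  ext y
  exact sub_lt_iff_lt_add'.symm

lemma expMeasure_Ioi {r : ℝ} (hr : 0 < r) (x : ℝ) :
    expMeasure r (Set.Ioi x) = ENNReal.ofReal (Real.exp (-(r * max x 0))) := by
  have := isProbabilityMeasure_expMeasure hr
  rw [← Set.compl_Iic, prob_compl_eq_one_sub measurableSet_Iic, ← ofReal_cdf,
    ← ENNReal.ofReal_one, ← ENNReal.ofReal_sub _ (cdf_nonneg _ x), cdf_expMeasure_eq hr]
  split_ifs with hx
  · rw [max_eq_left hx, sub_sub_cancel]
  · rw [max_eq_right (not_le.mp hx).le, mul_zero, neg_zero, Real.exp_zero, sub_zero]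

lemma integral_exp_neg_mul_sub {r : ℝ} (hr : r ≠ 0) (a b c : ℝ) :
    ∫ s in a..b, Real.exp (-(r * (c - s))) =
      (Real.exp (-(r * (c - b))) - Real.exp (-(r * (c - a)))) / r := by
  have exponent_eq (s : ℝ) : -(r * (c - s)) = r * s - r * c := by ring
  simp only [exponent_eq]
  rw [intervalIntegral.integral_comp_mul_sub Real.exp hr, integral_exp, smul_eq_mul,
    inv_mul_eq_div]

lemma integral_exp_neg_mul_max_sub {r a b c : ℝ} (hr : r ≠ 0) (hac : a ≤ c) (hcb : c ≤ b) :
    ∫ s in a..b, Real.exp (-(r * max (c - s) 0)) =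
      (1 - Real.exp (-(r * (c - a)))) / r + (b - c) := by
  have hcont : Continuous fun s : ℝ => Real.exp (-(r * max (c - s) 0)) := by fun_prop
  have left_part : ∫ s in a..c, Real.exp (-(r * max (c - s) 0)) =
      (1 - Real.exp (-(r * (c - a)))) / r := by
    have integrand_eq : Set.EqOn (fun s => Real.exp (-(r * max (c - s) 0)))
        (fun s => Real.exp (-(r * (c - s)))) (Set.uIcc a c) := by
      intro s hs
      rw [Set.uIcc_of_le hac] at hs
      simp only [max_eq_left (sub_nonneg.mpr hs.2)]
    rw [intervalIntegral.integral_congr integrand_eq, integral_exp_neg_mul_sub hr, sub_self,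
      mul_zero, neg_zero, Real.exp_zero]
  have right_part : ∫ s in c..b, Real.exp (-(r * max (c - s) 0)) = b - c := by
    have integrand_eq : Set.EqOn (fun s => Real.exp (-(r * max (c - s) 0)))
        (fun _ => 1) (Set.uIcc c b) := by
      intro s hs
      rw [Set.uIcc_of_le hcb] at hs
      simp only [max_eq_right (sub_nonpos.mpr hs.1), mul_zero, neg_zero, Real.exp_zero]
    rw [intervalIntegral.integral_congr integrand_eq, integral_one]
  rw [← intervalIntegral.integral_add_adjacent_intervals (hcont.intervalIntegrable a c)
    (hcont.intervalIntegrable c b), left_part, right_part]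

lemma setLIntegral_Icc_expMeasure_Ioi_sub {r a b c : ℝ} (hr : 0 < r) (hac : a ≤ c) (hcb : c ≤ b) :
    ∫⁻ s in Set.Icc a b, expMeasure r (Set.Ioi (c - s)) =
      ENNReal.ofReal ((1 - Real.exp (-(r * (c - a)))) / r + (b - c)) := by
  have hcont : Continuous fun s : ℝ => Real.exp (-(r * max (c - s) 0)) := by fun_prop
  simp only [expMeasure_Ioi hr]
  rw [← ofReal_integral_eq_lintegral_ofReal hcont.integrableOn_Icc
      (.of_forall fun _ => (Real.exp_pos _).le),
    integral_Icc_eq_integral_Ioc, ← intervalIntegral.integral_of_le (hac.trans hcb),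
    integral_exp_neg_mul_max_sub hr.ne' hac hcb]

/-- Paper's switching lemma: if `S` is uniform on `[0, T_d]`, `X` is exponential with
rate `λ_c`, and `S, X` are independent, then for `0 ≤ Δt ≤ T_d`,
`Pr(S + X > Δt) = 1 − Δt/T_d + (1 − e^{−λ_c Δt})/(λ_c T_d)`. -/
theorem switching_lemma {Ω : Type*} [MeasureSpace Ω] [IsProbabilityMeasure (ℙ : Measure Ω)]
    (Td lc dt : ℝ) (hTd : 0 < Td) (hlc : 0 < lc) (hdt0 : 0 ≤ dt) (hdt : dt ≤ Td)
    (S X : Ω → ℝ) (hSm : Measurable S) (hXm : Measurable X)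
    (hS : Measure.map S ℙ = (ENNReal.ofReal Td)⁻¹ • volume.restrict (Set.Icc 0 Td))
    (hX : Measure.map X ℙ = expMeasure lc)
    (hindep : IndepFun S X ℙ) :
    ℙ {ω | dt < S ω + X ω} =
      ENNReal.ofReal (1 - dt / Td + (1 - Real.exp (-lc * dt)) / (lc * Td)) := by
  have := isProbabilityMeasure_expMeasure hlc
  calc ℙ {ω | dt < S ω + X ω}
      = (Measure.map S ℙ ∗ Measure.map X ℙ) (Set.Ioi dt) := by
        rw [← hindep.map_add_eq_map_conv_map hSm hXm,
          Measure.map_apply (hSm.add hXm) measurableSet_Ioi]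
        rfl
    _ = (ENNReal.ofReal Td)⁻¹ * ∫⁻ s in Set.Icc 0 Td, expMeasure lc (Set.Ioi (dt - s)) := by
        rw [conv_Ioi_eq_lintegral, hS, hX, lintegral_smul_measure, smul_eq_mul]
    _ = ENNReal.ofReal (Td⁻¹ * ((1 - Real.exp (-(lc * dt))) / lc + (Td - dt))) := by
        rw [setLIntegral_Icc_expMeasure_Ioi_sub hlc hdt0 hdt, sub_zero,
          ← ENNReal.ofReal_inv_of_pos hTd, ← ENNReal.ofReal_mul (inv_nonneg.mpr hTd.le)]
    _ = ENNReal.ofReal (1 - dt / Td + (1 - Real.exp (-lc * dt)) / (lc * Td)) := by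
        rw [neg_mul]
        congr 1
        field_simp
        ring
end

section
/- Let $T_d > 0$, $\lambda_c > 0$, $\lambda_w > 0$, and $w \in [0, 1]$. Define $f(t) = w\,\lambda_c e^{-\lambda_c t} + (1 - w)\,\tfrac{1 - e^{-\lambda_c t}}{T_d}$ for $t \in [0, T_d]$, and $g(x) = \tfrac{1 - e^{-x T_d}}{x}$ for $x > 0$. Then $\int_0^{T_d} f(t)\, dt > 0$ and $$\frac{\int_0^{T_d} e^{-\lambda_w t} f(t)\, dt}{\int_0^{T_d} f(t)\, dt} \;=\; \frac{\big(w\lambda_c - \tfrac{1-w}{T_d}\big)\, g(\lambda_c + \lambda_w) + \tfrac{1-w}{T_d}\, g(\lambda_w)}{1 - w + \big(w\lambda_c - \tfrac{1-w}{T_d}\big)\, g(\lambda_c)}.$$ -/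
open Real

/-- The function `g` of the paper, with `T = T_d` made explicit: for `0 ≤ T` and `x ≠ 0` it is the
Laplace transform at `x` of the indicator function of `[0, T]`. At `x = 0` the value is `0`, from
division by zero, and not `T`. -/
noncomputable def intervalLaplace (T x : ℝ) : ℝ := (1 - exp (-x * T)) / x

/-- The unnormalized density `f` of the paper's control time `τ_c`: an exponential density of rate
`lc` and the density associated with a data-channel handshake of duration `Td`, mixed with weights
`w` and `1 - w`. The restriction to `[0, Td]` is left to the bounds of the integrals. -/
noncomputable def controlDensity (Td lc w t : ℝ) : ℝ :=
  w * lc * exp (-lc * t) + (1 - w) * (1 - exp (-lc * t)) / Td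

section intervalLaplace

variable {T x : ℝ}

theorem integral_exp_neg_mul_eq_intervalLaplace (T : ℝ) (hx : x ≠ 0) :
    ∫ t in (0 : ℝ)..T, exp (-x * t) = intervalLaplace T x := by
  rw [intervalIntegral.integral_comp_mul_left exp (neg_ne_zero.mpr hx), integral_exp, mul_zero,
    exp_zero, smul_eq_mul, intervalLaplace]
  ring

theorem intervalLaplace_lt (hT : T ≠ 0) (hx : 0 < x) : intervalLaplace T x < T := by
  rw [intervalLaplace, div_lt_iff₀ hx]
  linarith [add_one_lt_exp (mul_ne_zero (neg_ne_zero.mpr hx.ne') hT)]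

theorem one_lt_add_inv_mul_intervalLaplace (h : 0 < x * T) :
    1 < (x + T⁻¹) * intervalLaplace T x := by
  have hx : x ≠ 0 := left_ne_zero_of_mul h.ne'
  have hT : T ≠ 0 := right_ne_zero_of_mul h.ne'
  have hexp : (x * T + 1) * exp (-(x * T)) < 1 := by
    rw [exp_neg, ← div_eq_mul_inv, div_lt_one (exp_pos _)]
    exact add_one_lt_exp h.ne'
  calc 1 < (x * T + 1) * (1 - exp (-(x * T))) / (x * T) := by
        rw [lt_div_iff₀ h]
        linarith
    _ = (x + T⁻¹) * intervalLaplace T x := by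
        rw [intervalLaplace, neg_mul]
        field_simp

end intervalLaplace

section controlDensity

variable {Td lc w s : ℝ}

theorem controlDensity_eq (Td lc w t : ℝ) :
    controlDensity Td lc w t = (w * lc - (1 - w) / Td) * exp (-lc * t) + (1 - w) / Td := by
  rw [controlDensity]
  ring

theorem integral_controlDensity (w : ℝ) (hTd : Td ≠ 0) (hlc : lc ≠ 0) :
    ∫ t in (0 : ℝ)..Td, controlDensity Td lc w t =
      1 - w + (w * lc - (1 - w) / Td) * intervalLaplace Td lc := by
  simp only [controlDensity_eq]
  rw [intervalIntegral.integral_add (Continuous.intervalIntegrable (by fun_prop) _ _)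
      intervalIntegrable_const,
    intervalIntegral.integral_const_mul, integral_exp_neg_mul_eq_intervalLaplace Td hlc,
    intervalIntegral.integral_const, sub_zero, smul_eq_mul, mul_div_cancel₀ _ hTd, add_comm]

theorem integral_exp_neg_mul_controlDensity (Td w : ℝ) (hs : s ≠ 0) (hlcs : lc + s ≠ 0) :
    ∫ t in (0 : ℝ)..Td, exp (-s * t) * controlDensity Td lc w t =
      (w * lc - (1 - w) / Td) * intervalLaplace Td (lc + s) +
        (1 - w) / Td * intervalLaplace Td s := by
  have exp_mul_density (t : ℝ) : exp (-s * t) * controlDensity Td lc w t =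
      (w * lc - (1 - w) / Td) * exp (-(lc + s) * t) + (1 - w) / Td * exp (-s * t) := by
    rw [controlDensity_eq, neg_add, add_mul, exp_add]
    ring
  simp only [exp_mul_density]
  rw [intervalIntegral.integral_add (Continuous.intervalIntegrable (by fun_prop) _ _)
      (Continuous.intervalIntegrable (by fun_prop) _ _),
    intervalIntegral.integral_const_mul, intervalIntegral.integral_const_mul,
    integral_exp_neg_mul_eq_intervalLaplace Td hlcs, integral_exp_neg_mul_eq_intervalLaplace Td hs]

-- The density may change sign when `1 < w`, but its total mass is affine in `w`, positive at
-- `w = 0` and increasing.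
theorem integral_controlDensity_pos (hTd : 0 < Td) (hlc : 0 < lc) (hw : 0 ≤ w) :
    0 < ∫ t in (0 : ℝ)..Td, controlDensity Td lc w t := by
  have handshake_mass_pos : 0 < 1 - intervalLaplace Td lc / Td :=
    sub_pos.mpr ((div_lt_one hTd).mpr (intervalLaplace_lt hTd.ne' hlc))
  have mass_slope_pos : 0 < (lc + Td⁻¹) * intervalLaplace Td lc - 1 :=
    sub_pos.mpr (one_lt_add_inv_mul_intervalLaplace (mul_pos hlc hTd))
  calc 0 < 1 - intervalLaplace Td lc / Td +
          w * ((lc + Td⁻¹) * intervalLaplace Td lc - 1) := by positivity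
    _ = ∫ t in (0 : ℝ)..Td, controlDensity Td lc w t := by
        rw [integral_controlDensity w hTd.ne' hlc.ne']
        ring

end controlDensity

theorem pctrl_star_closed_form_general {Td lc lw w : ℝ}
    (hTd : 0 < Td) (hlc : 0 < lc) (hw : 0 ≤ w) (hlw : lw ≠ 0) (hlclw : lc + lw ≠ 0) :
    (0 < ∫ t in (0 : ℝ)..Td, controlDensity Td lc w t) ∧
    (∫ t in (0 : ℝ)..Td, exp (-lw * t) * controlDensity Td lc w t) /
      (∫ t in (0 : ℝ)..Td, controlDensity Td lc w t) =
      ((w * lc - (1 - w) / Td) * intervalLaplace Td (lc + lw) +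
          (1 - w) / Td * intervalLaplace Td lw) /
        (1 - w + (w * lc - (1 - w) / Td) * intervalLaplace Td lc) :=
  ⟨integral_controlDensity_pos hTd hlc hw, by
    rw [integral_exp_neg_mul_controlDensity Td w hlw hlclw,
      integral_controlDensity w hTd.ne' hlc.ne']⟩

/-- Closed form (paper's equation (8)) for `p_ctrl⋆`: with (unnormalized) density
`f(t) = w·λc·e^{−λc t} + (1−w)·(1 − e^{−λc t})/T_d` on `[0, T_d]` and
`g(x) = (1 − e^{−x T_d})/x`, the total mass `∫₀^{T_d} f` is positive and
`(∫₀^{T_d} e^{−λw t} f(t) dt) / (∫₀^{T_d} f(t) dt)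
  = ((w λc − (1−w)/T_d) g(λc+λw) + ((1−w)/T_d) g(λw)) / (1 − w + (w λc − (1−w)/T_d) g(λc))`. -/
theorem pctrl_star_closed_form (Td lc lw w : ℝ)
    (hTd : 0 < Td) (hlc : 0 < lc) (hlw : 0 < lw) (hw0 : 0 ≤ w) (hw1 : w ≤ 1) :
    (0 < ∫ t in (0:ℝ)..Td,
        (w * lc * Real.exp (-lc * t) + (1 - w) * (1 - Real.exp (-lc * t)) / Td)) ∧
    (∫ t in (0:ℝ)..Td, Real.exp (-lw * t) *
        (w * lc * Real.exp (-lc * t) + (1 - w) * (1 - Real.exp (-lc * t)) / Td)) /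
      (∫ t in (0:ℝ)..Td,
        (w * lc * Real.exp (-lc * t) + (1 - w) * (1 - Real.exp (-lc * t)) / Td)) =
      ((w * lc - (1 - w) / Td) * ((1 - Real.exp (-(lc + lw) * Td)) / (lc + lw)) +
          (1 - w) / Td * ((1 - Real.exp (-lw * Td)) / lw)) /
        (1 - w + (w * lc - (1 - w) / Td) * ((1 - Real.exp (-lc * Td)) / lc)) :=
  pctrl_star_closed_form_general hTd hlc hw0 hlw.ne' (add_pos hlc hlw).ne'
end
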